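/- Let u ∈ PC[0,1] be non-constant, let h > 0 be the minimal jump height of u and l > 0 the minimal length of its intervals of constancy. Then every piecewise constant function w on [0,1] with J(w) < J(u) satisfies ‖w − u‖_{L¹[0,1]} ≥ (1/2)·h·l. -/

import Mathlib

open MeasureTheory Filter Set
open scoped ENNReal Classical

noncomputable section

/-- The Lebesgue measure restricted to `[0,1]`. -/
def mu01 : Measure ℝ := volume.restrict (Set.Icc (0:ℝ) 1)

/-- The step function determined by partition points `x` and values `a`. -/
def stepF {m : ℕ} (x : Fin (m + 1) → ℝ) (a : Fin m → ℝ) : ℝ → ℝ := fun t =>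
  ∑ l : Fin m, Set.indicator (Set.Ioo (x l.castSucc) (x l.succ)) (fun _ => a l) t

/-- `u` is a.e. on `[0,1]` represented by the step function with partition `x` and values `a`. -/
def IsPCRep (u : ℝ → ℝ) {m : ℕ} (x : Fin (m + 1) → ℝ) (a : Fin m → ℝ) : Prop :=
  StrictMono x ∧ x 0 = 0 ∧ x (Fin.last m) = 1 ∧ ∀ᵐ t ∂mu01, u t = stepF x a t

/-- `u` is piecewise constant on `[0,1]` (up to a.e. equality). -/
def IsPC (u : ℝ → ℝ) : Prop :=
  ∃ (m : ℕ) (x : Fin (m + 1) → ℝ) (a : Fin m → ℝ), IsPCRep u x a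

/-- The number of jumps `J(u)`: the minimal number of interior partition points over all
piecewise constant representations of `u`. -/
def jumps (u : ℝ → ℝ) : ℕ :=
  sInf {jj : ℕ | ∃ (x : Fin (jj + 2) → ℝ) (a : Fin (jj + 1) → ℝ), IsPCRep u x a}

/-- `u` is piecewise constant with all jump locations inside `S`. -/
def IsPCIn (u : ℝ → ℝ) (S : Set ℝ) : Prop :=
  ∃ (m : ℕ) (x : Fin (m + 1) → ℝ) (a : Fin m → ℝ), IsPCRep u x a ∧
    ∀ i : Fin (m + 1), i ≠ 0 → i ≠ Fin.last m → x i ∈ S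

/-- The `L¹[0,1]` distance of two functions. -/
def L1dist (u v : ℝ → ℝ) : ℝ := ∫ t, |u t - v t| ∂mu01

/-- The continuous `L¹`-Potts functional `P_γ` with data `f`. -/
def Potts (γ : ℝ) (f u : ℝ → ℝ) : ℝ≥0∞ :=
  if IsPC u then ENNReal.ofReal (γ * (jumps u : ℝ) + L1dist u f) else ⊤

/-- The (semi-)discrete `L¹`-Potts functional with data `f`, restricted to piecewise
constant functions whose jumps lie in `S`. -/
def PottsIn (γ : ℝ) (f : ℝ → ℝ) (S : Set ℝ) (u : ℝ → ℝ) : ℝ≥0∞ :=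
  if IsPCIn u S then ENNReal.ofReal (γ * (jumps u : ℝ) + L1dist u f) else ⊤

theorem stepF_eq_of_mem {m : ℕ} {x : Fin (m + 1) → ℝ} (a : Fin m → ℝ) (hx : StrictMono x)
    {j : Fin m} {t : ℝ} (ht : t ∈ Ioo (x j.castSucc) (x j.succ)) : stepF x a t = a j := by
  unfold stepF
  rw [Finset.sum_eq_single j, indicator_of_mem ht]
  · intro l _ hl
    refine indicator_of_notMem (fun h => ?_) _
    rcases lt_or_gt_of_ne hl with h' | h'
    · have := hx.monotone (show l.succ ≤ j.castSucc from Fin.succ_le_castSucc_iff.2 h')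
      linarith [h.2, ht.1]
    · have := hx.monotone (show j.succ ≤ l.castSucc from Fin.succ_le_castSucc_iff.2 h')
      linarith [h.1, ht.2]
  · simp

theorem integrable_stepF {m : ℕ} (x : Fin (m + 1) → ℝ) (a : Fin m → ℝ) :
    Integrable (stepF x a) mu01 := by
  have : IsFiniteMeasure mu01 := by unfold mu01; infer_instance
  exact integrable_finsetSum _ fun l _ => (integrable_const _).indicator measurableSet_Ioo

/-- The infimum defining `jumps` is attained. -/
theorem IsPC.exists_rep_jumps {w : ℝ → ℝ} (hw : IsPC w) :
    ∃ (y : Fin (jumps w + 2) → ℝ) (b : Fin (jumps w + 1) → ℝ), IsPCRep w y b := by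
  obtain ⟨n, y, b, h⟩ := hw
  cases n with
  | zero =>
    have h0 := h.2.1
    have h1 : y 0 = 1 := h.2.2.1
    linarith
  | succ n =>
    exact Nat.sInf_mem (s := {jj : ℕ | ∃ (x : Fin (jj + 2) → ℝ) (a : Fin (jj + 1) → ℝ),
      IsPCRep w x a}) ⟨n, y, b, h⟩

/-- An open interval avoiding all interior partition points lies in a single piece. -/
theorem exists_piece_of_forall_notMem {k : ℕ} {y : Fin (k + 2) → ℝ} {p q : ℝ}
    (h0 : y 0 ≤ p) (h1 : q ≤ y (Fin.last (k + 1)))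
    (h : ∀ j : Fin k, y j.succ.castSucc ∉ Ioo p q) :
    ∃ j : Fin (k + 1), y j.castSucc ≤ p ∧ q ≤ y j.succ := by
  obtain ⟨j, hj, hmax⟩ := (Finset.univ.filter fun j : Fin (k + 1) =>
    y j.castSucc ≤ p).exists_max_image id ⟨0, by simpa using h0⟩
  simp only [Finset.mem_filter, Finset.mem_univ, true_and, id] at hj hmax
  refine ⟨j, hj, ?_⟩
  induction j using Fin.lastCases with
  | last => simpa using h1
  | cast i =>
    by_contra hlt
    refine h i ⟨?_, not_le.1 hlt⟩
    by_contra hle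
    exact absurd (hmax i.succ (not_lt.1 hle)) (not_le.2 Fin.castSucc_lt_succ)

/-- Pigeonhole: fewer than `m + 1` points cannot meet all windows of length `d` centred at the
interior partition points, if consecutive partition points are at least `d` apart. -/
theorem exists_window_avoiding {m k : ℕ} (hk : k < m + 1) {x : Fin (m + 3) → ℝ}
    (hx : StrictMono x) {d : ℝ} (hd : ∀ i : Fin (m + 2), d ≤ x i.succ - x i.castSucc)
    (z : Fin k → ℝ) :
    ∃ i : Fin (m + 1), ∀ j, z j ∉ Ioo (x i.succ.castSucc - d / 2) (x i.succ.castSucc + d / 2) := by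
  by_contra! hcon
  choose f hf using hcon
  obtain ⟨i, i', hne, heq⟩ := Fintype.exists_ne_map_eq_of_card_lt f (by simpa using hk)
  wlog hlt : i < i' generalizing i i'
  · exact this i' i hne.symm heq.symm (lt_of_le_of_ne (not_lt.1 hlt) hne.symm)
  have hi := hf i
  have hi' := hf i'
  rw [← heq] at hi'
  have hgap := hd i.succ
  have hmono : x i.succ.succ ≤ x i'.succ.castSucc :=
    hx.monotone (Fin.succ_le_castSucc_iff.2 (Fin.succ_lt_succ_iff.2 hlt))
  linarith [hi.2, hi'.1]

/-- Lower bound for the `L¹` norm on `[0,1]` of a function bounded below on two adjacent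
intervals of equal length. -/
theorem le_integral_mu01_of_two_windows {F : ℝ → ℝ} (hF : Integrable F mu01) (hF0 : ∀ t, 0 ≤ F t)
    {p r A B : ℝ} (hr : 0 ≤ r) (h0 : 0 ≤ p - r) (h1 : p + r ≤ 1)
    (hA : ∀ t ∈ Ioo (p - r) p, A ≤ F t) (hB : ∀ t ∈ Ioo p (p + r), B ≤ F t) :
    r * (A + B) ≤ ∫ t, F t ∂mu01 := by
  have : IsFiniteMeasure mu01 := by unfold mu01; infer_instance
  have hreal : ∀ {s t : ℝ}, 0 ≤ s → s ≤ t → t ≤ 1 → mu01.real (Ioo s t) = t - s := by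
    intro s t hs hst ht
    rw [mu01, measureReal_restrict_apply measurableSet_Ioo,
      inter_eq_left.2 (Ioo_subset_Icc_self.trans (Icc_subset_Icc hs ht)),
      Real.volume_real_Ioo_of_le hst]
  have hiA : Integrable ((Ioo (p - r) p).indicator fun _ => A) mu01 :=
    (integrable_const A).indicator measurableSet_Ioo
  have hiB : Integrable ((Ioo p (p + r)).indicator fun _ => B) mu01 :=
    (integrable_const B).indicator measurableSet_Ioo
  calc r * (A + B) = ∫ t, ((Ioo (p - r) p).indicator (fun _ => A) t
        + (Ioo p (p + r)).indicator (fun _ => B) t) ∂mu01 := by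
        rw [integral_add hiA hiB, integral_indicator_const _ measurableSet_Ioo,
          integral_indicator_const _ measurableSet_Ioo, hreal h0 (by linarith) (by linarith),
          hreal (by linarith) (by linarith) h1, smul_eq_mul, smul_eq_mul]
        ring
    _ ≤ ∫ t, F t ∂mu01 := by
        refine integral_mono (hiA.add hiB) hF fun t => ?_
        by_cases htA : t ∈ Ioo (p - r) p
        · have htB : t ∉ Ioo p (p + r) := fun h => lt_asymm htA.2 h.1
          simpa [indicator_of_mem htA, indicator_of_notMem htB] using hA t htA
        · by_cases htB : t ∈ Ioo p (p + r)
          · simpa [indicator_of_notMem htA, indicator_of_mem htB] using hB t htB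
          · simpa [indicator_of_notMem htA, indicator_of_notMem htB] using hF0 t

theorem statement_4
    (u : ℝ → ℝ) (m : ℕ) (x : Fin (m + 3) → ℝ) (a : Fin (m + 2) → ℝ)
    -- `u` is piecewise constant with `m+2` pieces, in a minimal representation
    -- (values of adjacent pieces differ); in particular `u` is non-constant.
    (hrep : IsPCRep u x a)
    (hadj : ∀ i : Fin (m + 1), a i.castSucc ≠ a i.succ)
    (w : ℝ → ℝ) (hw : IsPC w) (hJ : jumps w < jumps u) :
    (Finset.univ.inf' Finset.univ_nonempty fun i : Fin (m + 1) => |a i.succ - a i.castSucc|) *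
      (Finset.univ.inf' Finset.univ_nonempty fun i : Fin (m + 2) => x i.succ - x i.castSucc) / 2
      ≤ L1dist w u := by
  obtain ⟨y, b, hy, hy0, hy1, hwy⟩ := hw.exists_rep_jumps
  have hju : jumps u ≤ m + 1 := Nat.sInf_le ⟨x, a, hrep⟩
  obtain ⟨hx, hx0, hx1, hux⟩ := hrep
  set h := Finset.univ.inf' Finset.univ_nonempty fun i : Fin (m + 1) => |a i.succ - a i.castSucc|
  set d := Finset.univ.inf' Finset.univ_nonempty fun i : Fin (m + 2) => x i.succ - x i.castSucc
  have hh : ∀ i : Fin (m + 1), h ≤ |a i.succ - a i.castSucc| := fun i =>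
    Finset.inf'_le _ (Finset.mem_univ i)
  have hd : ∀ i : Fin (m + 2), d ≤ x i.succ - x i.castSucc := fun i =>
    Finset.inf'_le _ (Finset.mem_univ i)
  have hd0 : 0 ≤ d := Finset.le_inf' _ _ fun i _ => sub_nonneg.2 (hx Fin.castSucc_lt_succ).le
  obtain ⟨i, hi⟩ := exists_window_avoiding (hJ.trans_le hju) hx hd fun j => y j.succ.castSucc
  have hleft : d ≤ x i.succ.castSucc - x i.castSucc.castSucc := hd i.castSucc
  have hright := hd i.succ
  have hge : 0 ≤ x i.castSucc.castSucc := hx0 ▸ hx.monotone (Fin.zero_le _)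
  have hle : x i.succ.succ ≤ 1 := hx1 ▸ hx.monotone (Fin.le_last _)
  obtain ⟨j, hjl, hjr⟩ := exists_piece_of_forall_notMem (y := y) (by linarith) (by linarith) hi
  have hL1 : L1dist w u = ∫ t, |stepF y b t - stepF x a t| ∂mu01 := by
    refine integral_congr_ae ?_
    filter_upwards [hwy, hux] with t hwt hut
    rw [hwt, hut]
  have hbound : d / 2 * (|b j - a i.castSucc| + |b j - a i.succ|) ≤ L1dist w u := by
    rw [hL1]
    refine le_integral_mu01_of_two_windows (p := x i.succ.castSucc)
      ((integrable_stepF y b).sub (integrable_stepF x a)).abs (fun t => abs_nonneg _)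
      (by linarith) (by linarith) (by linarith) ?_ ?_
    · intro t ht
      have hu : t ∈ Ioo (x i.castSucc.castSucc) (x i.castSucc.succ) :=
        ⟨by linarith [ht.1], ht.2⟩
      rw [Pi.sub_apply, stepF_eq_of_mem a hx hu,
        stepF_eq_of_mem b hy (j := j) ⟨by linarith [ht.1], by linarith [ht.2]⟩]
    · intro t ht
      have hu : t ∈ Ioo (x i.succ.castSucc) (x i.succ.succ) := ⟨ht.1, by linarith [ht.2]⟩
      rw [Pi.sub_apply, stepF_eq_of_mem a hx hu,
        stepF_eq_of_mem b hy (j := j) ⟨by linarith [ht.1], by linarith [ht.2]⟩]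
  have htri : h ≤ |b j - a i.castSucc| + |b j - a i.succ| := by
    linarith [hh i, abs_sub_le (a i.succ) (b j) (a i.castSucc), abs_sub_comm (b j) (a i.succ)]
  calc h * d / 2 = d / 2 * h := by ring
    _ ≤ d / 2 * (|b j - a i.castSucc| + |b j - a i.succ|) :=
      mul_le_mul_of_nonneg_left htri (by linarith)
    _ ≤ L1dist w u := hbound
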